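/- arXiv:1209.1088 — 3 statements merged into one kernel-verified Lean document; each statement's English description precedes it below -/
import Mathlib

section
/- Let G be a finite abelian group, k a commutative ring, and σ : k[G] → k[G] the k-linear map determined on basis elements by σ([g]) = [g⁻¹]. With U' = Σ_{g∈G} [g²], one has σ(a · U') = a · U' for every a ∈ k[G]. -/
/-- Let `G` be a finite abelian group, `k` a commutative ring, and `σ` the `k`-linear map on
`k[G]` determined on basis elements by `σ [g] = [g⁻¹]`.  With `U' = ∑ g, [g²]`, one has
`σ (a * U') = a * U'` for every `a ∈ k[G]`. -/
theorem stmt_1 (G : Type*) [CommGroup G] [Fintype G] (k : Type*) [CommRing k]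
    (σ : MonoidAlgebra k G →ₗ[k] MonoidAlgebra k G)
    (hσ : ∀ g : G, σ (MonoidAlgebra.of k G g) = MonoidAlgebra.of k G g⁻¹)
    (U' : MonoidAlgebra k G) (hU : U' = ∑ g : G, MonoidAlgebra.of k G (g ^ 2)) :
    ∀ a : MonoidAlgebra k G, σ (a * U') = a * U' := by
  intro a
  induction a using MonoidAlgebra.induction_on with
  | of h =>
    rw [hU, Finset.mul_sum, map_sum]
    simp only [← map_mul, hσ]
    refine Fintype.sum_equiv ((Equiv.mulLeft h).trans (Equiv.inv G)) _ _ fun g => ?_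
    congr 1
    simp only [Equiv.trans_apply, Equiv.coe_mulLeft, Equiv.inv_apply, mul_inv, pow_two]
    have e : h * (h⁻¹ * g⁻¹ * (h⁻¹ * g⁻¹)) = (h * h⁻¹) * (g⁻¹ * (h⁻¹ * g⁻¹)) := by
      simp only [mul_assoc]
    rw [e, mul_inv_cancel, one_mul, mul_left_comm]
  | add x y hx hy => rw [add_mul, map_add, hx, hy]
  | smul r x hx => rw [smul_mul_assoc, map_smul, hx]
end

section
/- Let k be a field and let A and B be finite-dimensional associative k-algebras. Then the following are equivalent: (i) for all a ∈ A and b ∈ B, the four k-linear endomorphisms of A ⊗_k B given by L_a ⊗ L_b, L_a ⊗ R_b, R_a ⊗ L_b and R_a ⊗ R_b all have trace zero, where L_x and R_x denote left and right multiplication by x and f ⊗ g denotes the tensor product of linear maps; (ii) A is unimodular or B is unimodular. -/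
open TensorProduct in
/-- Let `k` be a field and `A`, `B` finite-dimensional associative `k`-algebras.  The tensor
products of left/right multiplication operators `L_a ⊗ L_b`, `L_a ⊗ R_b`, `R_a ⊗ L_b`,
`R_a ⊗ R_b` all have trace zero on `A ⊗[k] B` for all `a`, `b` if and only if `A` is
unimodular or `B` is unimodular (`X` unimodular meaning every left and right multiplication
operator on `X` has trace zero). -/
theorem stmt_4 (k A B : Type*) [Field k]
    [Ring A] [Algebra k A] [FiniteDimensional k A]
    [Ring B] [Algebra k B] [FiniteDimensional k B] :
    (∀ (a : A) (b : B),
      LinearMap.trace k (A ⊗[k] B)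
        (TensorProduct.map (LinearMap.mulLeft k a) (LinearMap.mulLeft k b)) = 0 ∧
      LinearMap.trace k (A ⊗[k] B)
        (TensorProduct.map (LinearMap.mulLeft k a) (LinearMap.mulRight k b)) = 0 ∧
      LinearMap.trace k (A ⊗[k] B)
        (TensorProduct.map (LinearMap.mulRight k a) (LinearMap.mulLeft k b)) = 0 ∧
      LinearMap.trace k (A ⊗[k] B)
        (TensorProduct.map (LinearMap.mulRight k a) (LinearMap.mulRight k b)) = 0) ↔
    ((∀ a : A, LinearMap.trace k A (LinearMap.mulLeft k a) = 0 ∧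
        LinearMap.trace k A (LinearMap.mulRight k a) = 0) ∨
     (∀ b : B, LinearMap.trace k B (LinearMap.mulLeft k b) = 0 ∧
        LinearMap.trace k B (LinearMap.mulRight k b) = 0)) := by
  simp only [LinearMap.trace_tensorProduct', mul_eq_zero]
  constructor
  · intro h
    by_contra hc
    rw [not_or, not_forall, not_forall] at hc
    obtain ⟨⟨a, ha⟩, ⟨b, hb⟩⟩ := hc
    have := h a b
    tauto
  · intro h a b
    rcases h with h | h
    · have := h a
      tauto
    · have := h b
      tauto
end

section
/- Let k be a commutative ring and A an involutive associative k-algebra with involution x ↦ x*. On the Hochschild cochain complex Cⁿ(A,A) (n ≥ 0) define T by (Tf)(a₁,…,aₙ) = (−1)^{n(n+1)/2+1} ( f(aₙ*, aₙ₋₁*, …, a₁*) )* (and on C⁰(A,A) = A by T(x) = −x*). Then T∘T is the identity on each Cⁿ(A,A), and T is a chain map: d(Tf) = T(df) for every Hochschild cochain f. -/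
/-- The Hochschild differential `d : Cⁿ(A,A) → Cⁿ⁺¹(A,A)` on cochains
(`(df)(a₁,…,a_{n+1}) = a₁·f(a₂,…,a_{n+1}) + Σᵢ (−1)ⁱ f(a₁,…,aᵢ·aᵢ₊₁,…,a_{n+1})
  + (−1)^{n+1} f(a₁,…,aₙ)·a_{n+1}`). -/
def hochD {A : Type*} [Ring A] (n : ℕ)
    (f : (Fin n → A) → A) : (Fin (n + 1) → A) → A :=
  fun a =>
    a 0 * f (fun i => a i.succ) +
      (∑ i : Fin n, (-1 : ℤ) ^ (i.1 + 1) •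
        f (fun j => if j.1 < i.1 then a j.castSucc
            else if j.1 = i.1 then a i.castSucc * a i.succ
            else a j.succ)) +
      (-1 : ℤ) ^ (n + 1) • (f (fun i => a i.castSucc) * a (Fin.last n))

/-- The involution `T` on Hochschild cochains associated to an involution `σ` of `A`:
`(Tf)(a₁,…,aₙ) = (−1)^{n(n+1)/2+1} σ (f (σ aₙ, …, σ a₁))`. -/
def hochT {k A : Type*} [CommRing k] [Ring A] [Algebra k A]
    (σ : A →ₗ[k] A) (n : ℕ) (f : (Fin n → A) → A) : (Fin n → A) → A :=
  fun a => (-1 : ℤ) ^ (n * (n + 1) / 2 + 1) • σ (f (fun i => σ (a i.rev)))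

/-- For an involutive associative `k`-algebra `A` (involution `σ`, `σ (σ x) = x`,
`σ (x*y) = σ y * σ x`), the operator `T` on Hochschild cochains is an involution and a
chain map: `T ∘ T = id` and `d (T f) = T (d f)`. -/
theorem stmt_5 (k A : Type*) [CommRing k] [Ring A] [Algebra k A]
    (σ : A →ₗ[k] A) (hinv : ∀ x : A, σ (σ x) = x)
    (hmul : ∀ x y : A, σ (x * y) = σ y * σ x) :
    (∀ (n : ℕ) (f : (Fin n → A) → A), hochT σ n (hochT σ n f) = f) ∧
    (∀ (n : ℕ) (f : (Fin n → A) → A),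
      hochD n (hochT σ n f) = hochT σ (n + 1) (hochD n f)) := by
  have hsq : ∀ m : ℕ, (-1 : ℤ) ^ m * (-1 : ℤ) ^ m = 1 := fun m => by
    rw [← mul_pow]; norm_num
  refine ⟨fun n f => ?_, fun n f => ?_⟩
  · funext a
    simp only [hochT, map_zsmul, hinv, Fin.rev_rev, smul_smul, hsq, one_smul]
  · funext a
    have hsign : (-1 : ℤ) ^ ((n + 1) * (n + 1 + 1) / 2 + 1)
        = (-1 : ℤ) ^ (n * (n + 1) / 2 + 1) * (-1 : ℤ) ^ (n + 1) := by
      rw [← pow_add]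
      congr 1
      have h : (n + 1) * (n + 1 + 1) = n * (n + 1) + (n + 1) * 2 := by ring
      rw [h, Nat.add_mul_div_right _ _ (by norm_num)]
      ring
    simp only [hochD, hochT, hsign]
    generalize (-1 : ℤ) ^ (n * (n + 1) / 2 + 1) = e
    simp only [map_add, map_sum, map_zsmul, hmul, hinv, smul_add, Finset.smul_sum,
      smul_smul, mul_assoc, hsq, mul_one, Fin.rev_zero, Fin.rev_last, Fin.rev_succ,
      Fin.rev_castSucc, mul_smul_comm, smul_mul_assoc]
    have hmid : (∑ i : Fin n, ((-1 : ℤ) ^ (i.1 + 1) * e) •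
        σ (f (fun j => σ (if j.rev.1 < i.1 then a j.rev.castSucc
            else if j.rev.1 = i.1 then a i.castSucc * a i.succ
            else a j.rev.succ)))) =
        ∑ i : Fin n, (e * ((-1 : ℤ) ^ (n + 1) * (-1 : ℤ) ^ (i.1 + 1))) •
        σ (f (fun j => if j.1 < i.1 then σ (a j.rev.succ)
            else if j.1 = i.1 then σ (a i.rev.succ) * σ (a i.rev.castSucc)
            else σ (a j.rev.castSucc))) := by
      rw [← Equiv.sum_comp Fin.revPerm]
      refine Finset.sum_congr rfl fun i _ => ?_
      simp only [Fin.revPerm_apply]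
      congr 1
      · rw [mul_comm]
        congr 1
        have hi := i.2
        rw [← pow_add, Fin.val_rev,
          show n + 1 + (i.1 + 1) = (n - (i.1 + 1) + 1) + 2 * (i.1 + 1) by omega,
          pow_add _ _ (2 * _), pow_mul]
        norm_num
      · congr 2
        funext j
        have hi := i.2
        have hj := j.2
        simp only [Fin.val_rev]
        rcases lt_trichotomy j.1 i.1 with h | h | h
        · rw [if_neg (by omega), if_neg (by omega), if_pos h]
        · rw [if_neg (by omega), if_pos (by omega), if_neg (by omega), if_pos h, hmul]
        · rw [if_pos (by omega), if_neg (by omega), if_neg (by omega)]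
    rw [hmid, mul_comm _ e]
    abel
end
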